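/- arXiv:1409.3702 — 2 statements merged into one kernel-verified Lean document; each statement's English description precedes it below -/
import Mathlib

section
/- Let G be a cofinal countable directed graph. Then no vertex v ∈ V ∖ NW_G is an infinite emitter; that is, every infinite emitter of G is a non-wandering vertex. -/
open scoped ENNReal NNReal Classical
open Filter MeasureTheory

/-- A countable directed graph: countable sets of vertices and edges with
source and range maps. -/
structure DirGraph where
  V : Type
  E : Type
  countV : Countable V
  countE : Countable E
  s : E → V
  r : E → V

namespace DirGraph

attribute [instance] countV countE

variable (G : DirGraph)

/-- `μ` is a finite path (a vertex counts as the empty path). -/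
def IsPath (μ : List G.E) : Prop := μ.Chain' (fun e f => G.r e = G.s f)

/-- `μ` is a finite path from `u` to `w`. -/
def IsPathFrom (μ : List G.E) (u w : G.V) : Prop :=
  G.IsPath μ ∧ (∀ e ∈ μ.head?, G.s e = u) ∧ (∀ e ∈ μ.getLast?, G.r e = w) ∧ (μ = [] → u = w)

/-- A function `F : E → ℝ` extended to finite paths. -/
def Fsum (F : G.E → ℝ) (μ : List G.E) : ℝ := (μ.map F).sum

/-- The matrix `A(β)` over the vertices, with entries in `[0,∞]`:
`A(β)_{uw} = Σ_{e : u → w} e^{-β F(e)}`. -/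
noncomputable def Amat (F : G.E → ℝ) (β : ℝ) (u w : G.V) : ℝ≥0∞ :=
  ∑' e : {e : G.E // G.s e = u ∧ G.r e = w}, ENNReal.ofReal (Real.exp (-β * F e.1))

/-- The powers of the matrix `A(β)`, defined recursively; `A(β)⁰` is the identity matrix. -/
noncomputable def Apow (F : G.E → ℝ) (β : ℝ) : ℕ → G.V → G.V → ℝ≥0∞
  | 0, u, w => if u = w then 1 else 0
  | n + 1, u, w => ∑' x : G.V, G.Amat F β u x * Apow F β n x w

/-- A sink is a vertex emitting no edges. -/
def IsSink (v : G.V) : Prop := ∀ e : G.E, G.s e ≠ v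

/-- An infinite emitter is a vertex emitting infinitely many edges. -/
def InfEmitter (v : G.V) : Prop := {e : G.E | G.s e = v}.Infinite

/-- A set of vertices is hereditary when it is closed under following edges. -/
def Hereditary (H : Set G.V) : Prop := ∀ e : G.E, G.s e ∈ H → G.r e ∈ H

/-- A set of vertices `H` is saturated when every vertex of `V ∖ V∞` all of whose
successors lie in `H` belongs to `H`. -/
def Saturated (H : Set G.V) : Prop :=
  ∀ v : G.V, ¬ G.IsSink v → ¬ G.InfEmitter v → (∀ e : G.E, G.s e = v → G.r e ∈ H) → v ∈ H

/-- `G` is cofinal when the only nonempty hereditary and saturated set of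
vertices is the whole vertex set. -/
def Cofinal : Prop :=
  ∀ H : Set G.V, H.Nonempty → G.Hereditary H → G.Saturated H → H = Set.univ

/-- The set of non-wandering vertices: those lying on a loop of length ≥ 1. -/
def NW : Set G.V := {v | ∃ μ : List G.E, μ ≠ [] ∧ G.IsPathFrom μ v v}

/-- `G` is strongly connected when there is a finite path between any two vertices. -/
def StronglyConnected : Prop := ∀ u w : G.V, ∃ μ : List G.E, G.IsPathFrom μ u w

/-- `G` is row-finite when every vertex emits only finitely many edges. -/
def RowFinite : Prop := ∀ v : G.V, {e : G.E | G.s e = v}.Finite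

/-- `ψ` is an `A(β)`-harmonic vector. -/
def Harmonic (F : G.E → ℝ) (β : ℝ) (ψ : G.V → ℝ≥0) : Prop :=
  ∀ v : G.V, ∑' w : G.V, G.Amat F β v w * ψ w = (ψ v : ℝ≥0∞)

/-- `A(β)` is transient when `Σ_n A(β)ⁿ_{vv} < ∞` for every vertex. -/
def Transient (F : G.E → ℝ) (β : ℝ) : Prop :=
  ∀ v : G.V, ∑' n : ℕ, G.Apow F β n v v ≠ ⊤

/-- `A(β)` is recurrent when `Σ_n A(β)ⁿ_{vv} = ∞` for some vertex. -/
def Recurrent (F : G.E → ℝ) (β : ℝ) : Prop :=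
  ∃ v : G.V, ∑' n : ℕ, G.Apow F β n v v = ⊤

/-- An exit path: a sequence of vertices joined by edges which leaves every
finite set of vertices. -/
def IsExitPath (t : ℕ → G.V) : Prop :=
  (∀ i : ℕ, ∃ e : G.E, G.s e = t i ∧ G.r e = t (i + 1)) ∧
  ∀ M : Set G.V, M.Finite → ∃ N : ℕ, ∀ i : ℕ, N ≤ i → t i ∉ M

/-- Tail equivalence of vertex sequences. -/
def TailEquiv (t t' : ℕ → G.V) : Prop :=
  ∃ k : ℤ, ∃ N : ℕ, ∀ i : ℕ, N ≤ i → 0 ≤ (i : ℤ) + k ∧ t ((i : ℤ) + k).toNat = t' i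

/-- A simple loop based at `v`: a loop which returns to `v` only at the very end. -/
def IsSimpleLoop (v : G.V) (μ : List G.E) : Prop :=
  μ ≠ [] ∧ G.IsPathFrom μ v v ∧
  ∀ (i : ℕ) (h : i + 1 < μ.length), G.r (μ.get ⟨i, Nat.lt_of_succ_lt h⟩) ≠ v

/-- `lⁿ_{vv}(β)`: the weighted number of simple loops of length `n` based at `v`. -/
noncomputable def loopSum (F : G.E → ℝ) (β : ℝ) (v : G.V) (n : ℕ) : ℝ≥0∞ :=
  ∑' μ : {μ : List G.E // μ.length = n ∧ G.IsSimpleLoop v μ},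
    ENNReal.ofReal (Real.exp (-β * G.Fsum F μ.1))

/-- The space `P(G)` of infinite paths in `G`. -/
def PathSpace : Type := {p : ℕ → G.E // ∀ i : ℕ, G.r (p i) = G.s (p (i + 1))}

/-- The Borel σ-algebra of `P(G)` as a subspace of the product `E^ℕ` with `E`
discrete (for a countable discrete space, the Borel σ-algebra is the power set). -/
instance : MeasurableSpace G.PathSpace :=
  letI : MeasurableSpace G.E := ⊤
  inferInstanceAs (MeasurableSpace {p : ℕ → G.E // ∀ i : ℕ, G.r (p i) = G.s (p (i + 1))})

/-- The cylinder set `Z'(v)` of infinite paths starting at the vertex `v`. -/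
def cylV (v : G.V) : Set G.PathSpace := {p | G.s (p.1 0) = v}

/-- The cylinder set `Z'(μ)` of infinite paths beginning with the finite path `μ`. -/
def cylP (μ : List G.E) : Set G.PathSpace :=
  {p | ∀ (i : ℕ) (h : i < μ.length), p.1 i = μ.get ⟨i, h⟩}

/-- The set `P(G)_wan` of wandering infinite paths: those visiting each vertex
only finitely many times. -/
def wanSet : Set G.PathSpace := {p | ∀ v : G.V, {i : ℕ | G.s (p.1 i) = v}.Finite}

end DirGraph

/-! The vertices that cannot reach a fixed vertex `v` always form a hereditary set. If `v` is a sink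
or an infinite emitter, this set is also saturated: a vertex subject to the saturation condition
is different from `v`, so a path from it to `v` must pass through one of its successors. As `v`
reaches itself, cofinality forces the set to be empty. Hence every vertex reaches `v`, in
particular the range of any edge emitted by `v`, and this closes a loop at `v`. -/

namespace DirGraph

variable {G : DirGraph} {u v w : G.V}

theorem isPath_nil : G.IsPath [] := List.isChain_nil

theorem isPath_singleton (e : G.E) : G.IsPath [e] := List.isChain_singleton e

theorem isPath_cons_cons {e f : G.E} {μ : List G.E} :
    G.IsPath (e :: f :: μ) ↔ G.r e = G.s f ∧ G.IsPath (f :: μ) :=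
  List.isChain_cons_cons

theorem isPathFrom_nil : G.IsPathFrom [] u w ↔ u = w := by
  simp [IsPathFrom, isPath_nil]

theorem isPathFrom_cons {e : G.E} {μ : List G.E} :
    G.IsPathFrom (e :: μ) u w ↔ G.s e = u ∧ G.IsPathFrom μ (G.r e) w := by
  cases μ with
  | nil => simp [IsPathFrom, isPath_nil, isPath_singleton]
  | cons f μ =>
    simp only [IsPathFrom, isPath_cons_cons, List.head?_cons, List.getLast?_cons_cons,
      Option.mem_some_iff, forall_eq', reduceCtorEq, false_imp_iff, and_true,
      eq_comm (a := G.r e)]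
    tauto

variable (G) in
/-- The vertex `w` can be reached from `u` by a finite path, possibly empty. -/
def Reachable (u w : G.V) : Prop := ∃ μ : List G.E, G.IsPathFrom μ u w

theorem Reachable.refl (v : G.V) : G.Reachable v v :=
  ⟨[], isPathFrom_nil.2 rfl⟩

theorem Reachable.head {e : G.E} (h : G.Reachable (G.r e) w) : G.Reachable (G.s e) w :=
  let ⟨μ, hμ⟩ := h
  ⟨e :: μ, isPathFrom_cons.2 ⟨rfl, hμ⟩⟩

theorem Reachable.eq_or_exists_edge (h : G.Reachable u w) :
    u = w ∨ ∃ e, G.s e = u ∧ G.Reachable (G.r e) w := by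
  obtain ⟨_ | ⟨e, μ⟩, hμ⟩ := h
  · exact .inl (isPathFrom_nil.1 hμ)
  · obtain ⟨he, hμ⟩ := isPathFrom_cons.1 hμ
    exact .inr ⟨e, he, μ, hμ⟩

theorem source_mem_NW_of_reachable {e : G.E} (h : G.Reachable (G.r e) (G.s e)) :
    G.s e ∈ G.NW :=
  let ⟨μ, hμ⟩ := h
  ⟨e :: μ, List.cons_ne_nil e μ, isPathFrom_cons.2 ⟨rfl, hμ⟩⟩

theorem hereditary_setOf_not_reachable (v : G.V) : G.Hereditary {u | ¬ G.Reachable u v} :=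
  fun _ hs hr => hs hr.head

theorem saturated_setOf_not_reachable (hv : G.IsSink v ∨ G.InfEmitter v) :
    G.Saturated {u | ¬ G.Reachable u v} := by
  intro u hsink hinf hsucc hu
  obtain rfl | ⟨e, he, hr⟩ := hu.eq_or_exists_edge
  · exact hv.elim hsink hinf
  · exact hsucc e he hr

theorem Cofinal.reachable (hG : G.Cofinal) (hv : G.IsSink v ∨ G.InfEmitter v) (u : G.V) :
    G.Reachable u v := by
  by_contra hu
  have huniv : {u | ¬ G.Reachable u v} = Set.univ :=
    hG _ ⟨u, hu⟩ (hereditary_setOf_not_reachable v) (saturated_setOf_not_reachable hv)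
  have hvv : ¬ G.Reachable v v := Set.eq_univ_iff_forall.1 huniv v
  exact hvv (.refl v)

end DirGraph

/-- every infinite emitter of a cofinal graph is non-wandering. -/
theorem stmt_3 (G : DirGraph) (hG : G.Cofinal) (v : G.V) (hv : G.InfEmitter v) :
    v ∈ G.NW := by
  obtain ⟨e, rfl⟩ := hv.nonempty
  exact DirGraph.source_mem_NW_of_reachable (hG.reachable (.inr hv) (G.r e))
end

section
/- Let G be a cofinal countable directed graph, F : E → ℝ a function and β ∈ ℝ. If there exists a nonzero A(β)-harmonic vector ψ ∈ [0,∞)^V, then limsup_n (A(β)ⁿ_{vv})^{1/n} ≤ 1 for every vertex v ∈ V. -/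
open scoped ENNReal NNReal Classical
open Filter MeasureTheory

/-!
If `Aψ ≤ ψ`, then `Aⁿψ ≤ ψ` for all `n` because `A` has nonnegative entries. Keeping only the
`v`-th term of `(Aⁿψ)_v` gives `Aⁿ_{vv} ψ_v ≤ ψ_v`, so `Aⁿ_{vv} ≤ 1` as soon as `0 < ψ_v < ∞`.
Cofinality makes a nonzero `ψ` vanish nowhere: the zero set of `ψ` is hereditary, and it is
saturated when `(Aψ)_v = ψ_v` at every vertex `v` emitting at least one but only finitely many
edges.
-/

namespace DirGraph

variable (G : DirGraph)

/-- `ψ` is `A(β)`-superharmonic: `A(β)ψ ≤ ψ` entrywise. The value `∞` is allowed. -/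
def Superharmonic (F : G.E → ℝ) (β : ℝ) (ψ : G.V → ℝ≥0∞) : Prop :=
  ∀ v : G.V, ∑' w : G.V, G.Amat F β v w * ψ w ≤ ψ v

/-- `ψ` is almost `A(β)`-harmonic: superharmonic, with equality `(A(β)ψ)_v = ψ_v` required only at
the vertices `v ∈ V ∖ V∞`. The value `∞` is allowed. -/
structure AlmostHarmonic (F : G.E → ℝ) (β : ℝ) (ψ : G.V → ℝ≥0∞) : Prop where
  superharmonic : G.Superharmonic F β ψ
  eq_of_regular : ∀ v : G.V, ¬ G.IsSink v → ¬ G.InfEmitter v →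
    ∑' w : G.V, G.Amat F β v w * ψ w = ψ v

variable {G} {F : G.E → ℝ} {β : ℝ}

theorem Harmonic.almostHarmonic {ψ : G.V → ℝ≥0} (hψ : G.Harmonic F β ψ) :
    G.AlmostHarmonic F β fun v => ψ v where
  superharmonic v := (hψ v).le
  eq_of_regular v _ _ := hψ v

section Powers

theorem tsum_apow_zero_mul (ψ : G.V → ℝ≥0∞) (v : G.V) :
    ∑' w : G.V, G.Apow F β 0 v w * ψ w = ψ v := by
  simp only [Apow, ite_mul, one_mul, zero_mul, tsum_ite_eq']

theorem tsum_apow_succ_mul (ψ : G.V → ℝ≥0∞) (n : ℕ) (v : G.V) :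
    ∑' w : G.V, G.Apow F β (n + 1) v w * ψ w =
      ∑' x : G.V, G.Amat F β v x * ∑' w : G.V, G.Apow F β n x w * ψ w := by
  simp only [Apow, ← ENNReal.tsum_mul_right, ← ENNReal.tsum_mul_left, mul_assoc]
  exact ENNReal.tsum_comm

variable {ψ : G.V → ℝ≥0∞}

theorem Superharmonic.tsum_apow_mul_le (hψ : G.Superharmonic F β ψ) (n : ℕ) (v : G.V) :
    ∑' w : G.V, G.Apow F β n v w * ψ w ≤ ψ v := by
  induction n generalizing v with
  | zero => exact (tsum_apow_zero_mul ψ v).le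
  | succ n ih =>
    calc ∑' w : G.V, G.Apow F β (n + 1) v w * ψ w
        = ∑' x : G.V, G.Amat F β v x * ∑' w : G.V, G.Apow F β n x w * ψ w :=
          tsum_apow_succ_mul ψ n v
      _ ≤ ∑' x : G.V, G.Amat F β v x * ψ x := by gcongr with x; exact ih x
      _ ≤ ψ v := hψ v

theorem Superharmonic.apow_self_le_one (hψ : G.Superharmonic F β ψ) {v : G.V}
    (hzero : ψ v ≠ 0) (htop : ψ v ≠ ⊤) (n : ℕ) : G.Apow F β n v v ≤ 1 := by
  have hmul : G.Apow F β n v v * ψ v ≤ 1 * ψ v :=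
    calc G.Apow F β n v v * ψ v
        ≤ ∑' w : G.V, G.Apow F β n v w * ψ w := ENNReal.le_tsum (f := fun w => _ * ψ w) v
      _ ≤ 1 * ψ v := (hψ.tsum_apow_mul_le n v).trans_eq (one_mul _).symm
  exact (ENNReal.mul_le_mul_iff_left hzero htop).1 hmul

end Powers

section ZeroSet

theorem amat_eq_zero_iff {u w : G.V} :
    G.Amat F β u w = 0 ↔ ∀ e : G.E, G.s e = u → G.r e ≠ w := by
  simp only [Amat, ENNReal.tsum_eq_zero, ENNReal.ofReal_eq_zero, (Real.exp_pos _).not_ge,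
    Subtype.forall, imp_false, not_and, ne_eq]

variable {ψ : G.V → ℝ≥0∞}

theorem tsum_amat_mul_eq_zero_iff {u : G.V} :
    ∑' w : G.V, G.Amat F β u w * ψ w = 0 ↔ ∀ e : G.E, G.s e = u → ψ (G.r e) = 0 := by
  simp only [ENNReal.tsum_eq_zero, mul_eq_zero, amat_eq_zero_iff]
  constructor
  · intro h e he
    exact (h (G.r e)).resolve_left fun hr => hr e he rfl
  · intro h w
    by_cases hw : ψ w = 0
    · exact Or.inr hw
    · exact Or.inl fun e he hr => hw (hr ▸ h e he)

theorem Superharmonic.hereditary_zeroSet (hψ : G.Superharmonic F β ψ) :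
    G.Hereditary {v | ψ v = 0} := fun e he =>
  tsum_amat_mul_eq_zero_iff.1 (nonpos_iff_eq_zero.1 ((hψ (G.s e)).trans_eq he)) e rfl

theorem AlmostHarmonic.saturated_zeroSet (hψ : G.AlmostHarmonic F β ψ) :
    G.Saturated {v | ψ v = 0} := fun v hsink hinf h =>
  (hψ.eq_of_regular v hsink hinf).symm.trans (tsum_amat_mul_eq_zero_iff.2 h)

theorem AlmostHarmonic.apply_ne_zero (hψ : G.AlmostHarmonic F β ψ) (hG : G.Cofinal)
    (hne : ψ ≠ 0) (v : G.V) : ψ v ≠ 0 := by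
  intro hv
  have hzeroSet : {u | ψ u = 0} = Set.univ :=
    hG _ ⟨v, hv⟩ hψ.superharmonic.hereditary_zeroSet hψ.saturated_zeroSet
  exact hne (funext (Set.eq_univ_iff_forall.1 hzeroSet))

end ZeroSet

end DirGraph

theorem stmt_6_general (G : DirGraph) (hG : G.Cofinal) (F : G.E → ℝ) (β : ℝ)
    (ψ : G.V → ℝ≥0∞) (hψ : G.AlmostHarmonic F β ψ) (hne : ψ ≠ 0) (v : G.V) (hv : ψ v ≠ ⊤) :
    Filter.limsup (fun n : ℕ => (G.Apow F β n v v) ^ ((n : ℝ)⁻¹)) Filter.atTop ≤ 1 := by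
  have hdiag : ∀ n, G.Apow F β n v v ≤ 1 :=
    hψ.superharmonic.apow_self_le_one (hψ.apply_ne_zero hG hne v) hv
  refine limsup_le_of_le isCobounded_le_of_bot (Eventually.of_forall fun n => ?_)
  exact ENNReal.rpow_le_one (hdiag n) (inv_nonneg.2 n.cast_nonneg)

/-- existence of a nonzero harmonic vector bounds the spectral radius by 1. -/
theorem stmt_6 (G : DirGraph) (hG : G.Cofinal) (F : G.E → ℝ) (β : ℝ)
    (ψ : G.V → ℝ≥0) (hψ : G.Harmonic F β ψ) (hne : ψ ≠ 0) :
    ∀ v : G.V,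
      Filter.limsup (fun n : ℕ => (G.Apow F β n v v) ^ ((n : ℝ)⁻¹)) Filter.atTop ≤ 1 := by
  have hne' : (fun v => (ψ v : ℝ≥0∞)) ≠ 0 := fun h =>
    hne (funext fun v => ENNReal.coe_eq_zero.1 (congrFun h v))
  exact fun v => stmt_6_general G hG F β _ hψ.almostHarmonic hne' v ENNReal.coe_ne_top
end
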